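/- For every integer n ≥ 1 there exist a finite alphabet Σ of size 2n, an NFA M over Σ with all states final whose state set has exactly 2n+2 elements, and a relation F flanking M, such that every complete DFA D over Σ with L(D) = L(M) has at least 2^n states. -/

import Mathlib

/-- A nondeterministic finite automaton (all states final). -/
structure NFA' (Q A : Type) where
  E : Q → A → Q → Prop
  I : Set Q

namespace NFA'

variable {Q A : Type}

/-- One step of the automaton on a set of states. -/
def step (M : NFA' Q A) (S : Set Q) (a : A) : Set Q := {q' | ∃ q ∈ S, M.E q a q'}

/-- `M.reach u` is the set of states reached after reading the word `u`
(`M(ε) = I`, `M(u·a) = {q' | ∃ q ∈ M(u), (q,a,q') ∈ E}`). -/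
def reach (M : NFA' Q A) (u : List A) : Set Q := u.foldl M.step M.I

/-- The (prefix-closed) language of `M`: words `u` with `M(u) ≠ ∅`. -/
def lang (M : NFA' Q A) : Set (List A) := {u | (M.reach u).Nonempty}

/-- `F` flanks `M`: for all words `u` and symbols `a`,
`u ∈ L(M) ∧ u·a ∉ L(M)` iff some state of `M(u)` forbids `a`. -/
def Flanks (M : NFA' Q A) (F : Q → A → Prop) : Prop :=
  ∀ (u : List A) (a : A),
    (u ∈ M.lang ∧ u ++ [a] ∉ M.lang) ↔ ∃ q ∈ M.reach u, F q a

end NFA'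

/-! The automaton stores a subset of `ι`: one letter per `i : ι` inserts `i`, another queries
whether `i` has been inserted. Nondeterminism lets it track each element independently, so two
states per element are enough, and a failing query of `i` is witnessed by the single state recording
that `i` is absent; hence the automaton is flanked. A deterministic automaton has to remember the
whole subset, because queries separate the left quotients of the words inserting different
subsets. -/

theorem card_le_card_of_injective_leftQuotient {α σ τ : Type*} [Fintype σ] [Fintype τ]
    (D : DFA α σ) {w : τ → List α}
    (hw : Function.Injective fun t => D.accepts.leftQuotient (w t)) :
    Fintype.card τ ≤ Fintype.card σ := by
  simp only [Language.leftQuotient_accepts_apply] at hw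
  exact Fintype.card_le_of_injective (fun t => D.eval (w t)) (.of_comp (f := D.acceptsFrom) hw)

namespace NFA'

variable {Q A : Type} {M : NFA' Q A}

theorem reach_append_singleton (u : List A) (a : A) :
    M.reach (u ++ [a]) = M.step (M.reach u) a :=
  List.foldl_concat ..

theorem mem_lang_append_singleton {u : List A} {a : A} :
    u ++ [a] ∈ M.lang ↔ (M.step (M.reach u) a).Nonempty := by
  rw [← reach_append_singleton]
  rfl

theorem step_empty (a : A) : M.step ∅ a = ∅ := by
  simp [step]

theorem reach_induction {P : Set Q → Prop} (initial : P M.I)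
    (step : ∀ S a, P S → (M.step S a).Nonempty → P (M.step S a)) (u : List A)
    (hu : u ∈ M.lang) : P (M.reach u) := by
  induction u using List.reverseRecOn with
  | nil => exact initial
  | append_singleton u a ih =>
    have hua := mem_lang_append_singleton.mp hu
    have hu' : u ∈ M.lang := by
      by_contra h
      rw [Set.not_nonempty_iff_eq_empty.mp h, step_empty] at hua
      exact Set.not_nonempty_empty hua
    rw [reach_append_singleton]
    exact step _ a (ih hu') hua

theorem flanks_of_forall_mem_lang {F : Q → A → Prop}
    (h : ∀ u ∈ M.lang, ∀ a, M.step (M.reach u) a = ∅ ↔ ∃ q ∈ M.reach u, F q a) :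
    M.Flanks F := by
  intro u a
  rw [mem_lang_append_singleton, Set.not_nonempty_iff_eq_empty]
  constructor
  · rintro ⟨hu, hstep⟩
    exact (h u hu a).mp hstep
  · rintro ⟨q, hq, hF⟩
    have hu : u ∈ M.lang := ⟨q, hq⟩
    exact ⟨hu, (h u hu a).mpr ⟨q, hq, hF⟩⟩

end NFA'

/-- The letters read by `subsetNFA`: `insert i` adds `i` to the stored subset of `ι`, and `query i`
tests whether `i` belongs to it. -/
inductive SubsetLetter (ι : Type) : Type
  | insert (i : ι)
  | query (i : ι)

/-- The states of `subsetNFA`: each of `absent i` and `present i` records the status of the single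
element `i`, and the states `sink k` are entered after a successful query. The sinks are
interchangeable, so the type `κ` indexing them only serves to adjust the number of states. -/
inductive SubsetState (ι κ : Type) : Type
  | absent (i : ι)
  | present (i : ι)
  | sink (k : κ)

/-- Letters as a sum type, used to count them. -/
def SubsetLetter.equivSum (ι : Type) : SubsetLetter ι ≃ ι ⊕ ι where
  toFun
    | insert i => .inl i
    | query i => .inr i
  invFun := Sum.elim insert query
  left_inv := by rintro (i | i) <;> rfl
  right_inv := by rintro (i | i) <;> rfl

/-- States as a sum type, used to count them. -/
def SubsetState.equivSum (ι κ : Type) : SubsetState ι κ ≃ (ι ⊕ ι) ⊕ κ where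
  toFun
    | absent i => .inl (.inl i)
    | present i => .inl (.inr i)
    | sink k => .inr k
  invFun := Sum.elim (Sum.elim absent present) sink
  left_inv := by rintro (i | i | k) <;> rfl
  right_inv := by rintro ((i | i) | k) <;> rfl

instance (ι : Type) [Fintype ι] : Fintype (SubsetLetter ι) :=
  .ofEquiv _ (SubsetLetter.equivSum ι).symm

instance (ι κ : Type) [Fintype ι] [Fintype κ] : Fintype (SubsetState ι κ) :=
  .ofEquiv _ (SubsetState.equivSum ι κ).symm

theorem SubsetLetter.card (ι : Type) [Fintype ι] :
    Fintype.card (SubsetLetter ι) = 2 * Fintype.card ι := by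
  rw [Fintype.card_congr (equivSum ι), Fintype.card_sum, two_mul]

theorem SubsetState.card (ι κ : Type) [Fintype ι] [Fintype κ] :
    Fintype.card (SubsetState ι κ) = 2 * Fintype.card ι + Fintype.card κ := by
  rw [Fintype.card_congr (equivSum ι κ), Fintype.card_sum, Fintype.card_sum, two_mul]

section SubsetNFA

open SubsetLetter SubsetState

variable {ι κ : Type}

/-- The transition relation of `subsetNFA`. Among the `absent` and `present` states only `present i`
survives `query i`, so a successful query erases the stored subset. -/
inductive SubsetTransition : SubsetState ι κ → SubsetLetter ι → SubsetState ι κ → Prop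
  | insert_self (i : ι) : SubsetTransition (absent i) (insert i) (present i)
  | insert_of_ne {i j : ι} (h : i ≠ j) : SubsetTransition (absent i) (insert j) (absent i)
  | insert_present (i j : ι) : SubsetTransition (present i) (insert j) (present i)
  | query_present (i : ι) (k : κ) : SubsetTransition (present i) (query i) (sink k)
  | sink (k l : κ) (a : SubsetLetter ι) : SubsetTransition (sink k) a (sink l)

/-- The relation flanking `subsetNFA`: `absent i` forbids `query i`. -/
inductive SubsetForbids : SubsetState ι κ → SubsetLetter ι → Prop
  | absent (i : ι) : SubsetForbids (absent i) (query i)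

/-- The set of states of `subsetNFA` that encodes the subset `S` of `ι`. -/
def subsetConfig (S : Set ι) : Set (SubsetState ι κ) :=
  absent '' Sᶜ ∪ present '' S

variable (ι κ) in
/-- The automaton storing a subset of `ι`, initially empty: it dies when queried for an element
outside the subset, and accepts every continuation of a successful query. -/
def subsetNFA : NFA' (SubsetState ι κ) (SubsetLetter ι) where
  E := SubsetTransition
  I := subsetConfig ∅

theorem subsetConfig_nonempty [Nonempty ι] (S : Set ι) :
    (subsetConfig S : Set (SubsetState ι κ)).Nonempty := by
  obtain ⟨i⟩ := ‹Nonempty ι›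
  by_cases hi : i ∈ S
  · exact ⟨present i, .inr ⟨i, hi, rfl⟩⟩
  · exact ⟨absent i, .inl ⟨i, hi, rfl⟩⟩

theorem exists_mem_subsetConfig_forbids_query_iff {S : Set ι} {i : ι} :
    (∃ q ∈ (subsetConfig S : Set (SubsetState ι κ)), SubsetForbids q (query i)) ↔ i ∉ S := by
  constructor
  · rintro ⟨_, ⟨_, hi, rfl⟩ | ⟨_, _, rfl⟩, ⟨⟩⟩
    exact hi
  · intro hi
    exact ⟨absent i, .inl ⟨i, hi, rfl⟩, .absent i⟩

theorem step_insert_subsetConfig (S : Set ι) (i : ι) :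
    (subsetNFA ι κ).step (subsetConfig S) (insert i) = subsetConfig (Insert.insert i S) := by
  ext q
  constructor
  · rintro ⟨_, ⟨j, hj, rfl⟩ | ⟨j, hj, rfl⟩, h⟩
    · cases h with
      | insert_self => exact .inr ⟨i, .inl rfl, rfl⟩
      | insert_of_ne hne => exact .inl ⟨j, not_or_intro hne hj, rfl⟩
    · cases h with
      | insert_present => exact .inr ⟨j, .inr hj, rfl⟩
  · rintro (⟨j, hj, rfl⟩ | ⟨j, hj, rfl⟩)
    · obtain ⟨hne, hjS⟩ := not_or.mp hj
      exact ⟨absent j, .inl ⟨j, hjS, rfl⟩, .insert_of_ne hne⟩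
    · by_cases hjS : j ∈ S
      · exact ⟨present j, .inr ⟨j, hjS, rfl⟩, .insert_present j i⟩
      · obtain rfl := hj.resolve_right hjS
        exact ⟨absent j, .inl ⟨j, hjS, rfl⟩, .insert_self j⟩

theorem step_query_subsetConfig_of_mem {S : Set ι} {i : ι} (hi : i ∈ S) :
    (subsetNFA ι κ).step (subsetConfig S) (query i) = Set.range sink := by
  ext q
  constructor
  · rintro ⟨_, ⟨j, _, rfl⟩ | ⟨j, _, rfl⟩, h⟩
    · cases h
    · cases h with
      | query_present _ k => exact ⟨k, rfl⟩
  · rintro ⟨k, rfl⟩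
    exact ⟨present i, .inr ⟨i, hi, rfl⟩, .query_present i k⟩

theorem step_query_subsetConfig_of_notMem {S : Set ι} {i : ι} (hi : i ∉ S) :
    (subsetNFA ι κ).step (subsetConfig S) (query i) = ∅ := by
  refine Set.eq_empty_of_forall_notMem ?_
  rintro _ ⟨_, ⟨j, _, rfl⟩ | ⟨j, hj, rfl⟩, h⟩
  · cases h
  · cases h with
    | query_present => exact hi hj

theorem step_range_sink (a : SubsetLetter ι) :
    (subsetNFA ι κ).step (Set.range sink) a = Set.range sink := by
  ext q
  constructor
  · rintro ⟨_, ⟨k, rfl⟩, h⟩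
    cases h with
    | sink _ l => exact ⟨l, rfl⟩
  · rintro ⟨k, rfl⟩
    exact ⟨sink k, ⟨k, rfl⟩, .sink k k a⟩

theorem step_query_subsetConfig_nonempty_iff [Nonempty κ] {S : Set ι} {i : ι} :
    ((subsetNFA ι κ).step (subsetConfig S) (query i)).Nonempty ↔ i ∈ S := by
  by_cases hi : i ∈ S
  · simp only [step_query_subsetConfig_of_mem hi, Set.range_nonempty, hi]
  · simp only [step_query_subsetConfig_of_notMem hi, Set.not_nonempty_empty, hi]

theorem reach_subsetNFA_eq_config_or_sinks {u : List (SubsetLetter ι)}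
    (hu : u ∈ (subsetNFA ι κ).lang) :
    (∃ S, (subsetNFA ι κ).reach u = subsetConfig S) ∨
      (subsetNFA ι κ).reach u = Set.range sink := by
  refine NFA'.reach_induction
    (P := fun X => (∃ S, X = subsetConfig S) ∨ X = Set.range sink) (.inl ⟨∅, rfl⟩) ?_ u hu
  rintro _ (i | i) (⟨S, rfl⟩ | rfl) hne
  · exact .inl ⟨_, step_insert_subsetConfig S i⟩
  · exact .inr (step_range_sink _)
  · by_cases hi : i ∈ S
    · exact .inr (step_query_subsetConfig_of_mem hi)
    · exact absurd (step_query_subsetConfig_of_notMem hi) hne.ne_empty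
  · exact .inr (step_range_sink _)

theorem subsetNFA_flanks [Nonempty ι] [Nonempty κ] : (subsetNFA ι κ).Flanks SubsetForbids := by
  refine NFA'.flanks_of_forall_mem_lang fun u hu a => ?_
  obtain ⟨S, hS⟩ | hsink := reach_subsetNFA_eq_config_or_sinks hu
  · rw [hS]
    cases a with
    | insert i =>
      have no_forbids : ¬∃ q ∈ (subsetConfig S : Set (SubsetState ι κ)),
          SubsetForbids q (insert i) := by
        rintro ⟨_, _, ⟨⟩⟩
      rw [step_insert_subsetConfig]
      exact iff_of_false (subsetConfig_nonempty _).ne_empty no_forbids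
    | query i =>
      rw [exists_mem_subsetConfig_forbids_query_iff, ← Set.not_nonempty_iff_eq_empty,
        step_query_subsetConfig_nonempty_iff]
  · have no_forbids : ¬∃ q ∈ Set.range (sink : κ → SubsetState ι κ), SubsetForbids q a := by
      rintro ⟨_, ⟨k, rfl⟩, ⟨⟩⟩
    rw [hsink, step_range_sink]
    exact iff_of_false (Set.range_nonempty sink).ne_empty no_forbids

theorem reach_map_insert (l : List ι) :
    (subsetNFA ι κ).reach (l.map insert) = subsetConfig {i | i ∈ l} := by
  induction l using List.reverseRecOn with
  | nil => simp [NFA'.reach, subsetNFA]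
  | append_singleton l i ih =>
    rw [List.map_append, List.map_singleton, NFA'.reach_append_singleton, ih,
      step_insert_subsetConfig]
    congr 1
    ext j
    simp [or_comm]

theorem map_insert_append_query_mem_lang_iff [Nonempty κ] {l : List ι} {i : ι} :
    l.map insert ++ [query i] ∈ (subsetNFA ι κ).lang ↔ i ∈ l := by
  rw [NFA'.mem_lang_append_singleton, reach_map_insert, step_query_subsetConfig_nonempty_iff,
    Set.mem_ofPred_eq]

theorem two_pow_card_le_of_accepts_eq_lang_subsetNFA [Fintype ι] [Nonempty κ] {σ : Type*}
    [Fintype σ] (D : DFA (SubsetLetter ι) σ) (hD : D.accepts = (subsetNFA ι κ).lang) :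
    2 ^ Fintype.card ι ≤ Fintype.card σ := by
  rw [← Fintype.card_finset]
  refine card_le_card_of_injective_leftQuotient D (w := fun S => S.toList.map insert) ?_
  have query_mem_leftQuotient_iff (S : Finset ι) (i : ι) :
      [query i] ∈ D.accepts.leftQuotient (S.toList.map insert) ↔ i ∈ S := by
    rw [Language.mem_leftQuotient, hD, ← Finset.mem_toList]
    exact map_insert_append_query_mem_lang_iff
  intro S T hST
  ext i
  rw [← query_mem_leftQuotient_iff, ← query_mem_leftQuotient_iff]
  exact Set.ext_iff.mp hST [query i]

end SubsetNFA

/-- for every `n ≥ 1` there is an alphabet of size `2n`, a flanked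
NFA with `2n + 2` states, such that every complete DFA accepting the same
language has at least `2^n` states. -/
theorem stmt12 (n : ℕ) (hn : 1 ≤ n) :
    ∃ (A : Type) (_ : Fintype A) (Q : Type) (_ : Fintype Q)
      (E : Q → A → Q → Prop) (I : Set Q) (F : Q → A → Prop),
      Fintype.card A = 2 * n ∧
      Fintype.card Q = 2 * n + 2 ∧
      (NFA'.mk E I).Flanks F ∧
      ∀ (D : Type) [Fintype D], ∀ (δ : D → A → D) (q0 : D) (Acc : Set D),
        {u : List A | List.foldl δ q0 u ∈ Acc} = (NFA'.mk E I).lang →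
        2 ^ n ≤ Fintype.card D := by
  have : Nonempty (Fin n) := ⟨⟨0, hn⟩⟩
  refine ⟨SubsetLetter (Fin n), inferInstance, SubsetState (Fin n) (Fin 2), inferInstance,
    SubsetTransition, subsetConfig ∅, SubsetForbids, ?_, ?_, subsetNFA_flanks, ?_⟩
  · rw [SubsetLetter.card, Fintype.card_fin]
  · rw [SubsetState.card, Fintype.card_fin, Fintype.card_fin]
  · intro D _ δ q0 Acc hD
    simpa only [Fintype.card_fin] using
      two_pow_card_le_of_accepts_eq_lang_subsetNFA (κ := Fin 2) (DFA.mk δ q0 Acc) hD
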